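/- Let M be the 27 × 27 integer matrix obtained by stacking vertically the three Kronecker products r ⊗ I₃ ⊗ I₃, I₃ ⊗ r ⊗ I₃, and I₃ ⊗ I₃ ⊗ r, where I₃ is the 3 × 3 identity matrix and r = (1, 1, 1). Let x_p = (0,1,0,0,52,0,0,1,1,0,52,0,54,2757,0,0,53,53,0,1,1,0,53,53,1,0,0) ∈ ℤ²⁷. Then the set of vectors x ∈ ℤ²⁷ with all coordinates nonnegative satisfying M x = M x_p and x₂₇ = 0 has exactly 2 elements. -/

import Mathlib

/-!
View `x ∈ ℤ²⁷` as a `3 × 3 × 3` array. Each row of `M` is the indicator of one of the 27 axis-parallel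
lines of this array (`M_mulVec_apply`), so `M x = M x_p` prescribes all the line sums. Two line sums of
`x_p` vanish, and `x₂₇ = 0` makes the bounds coming from the lines through neighbouring entries
tight; nonnegativity then fixes all but eight entries, leaving one free parameter:
`x = x_p + t • d` with `d = dir332` a kernel vector supported on the corners of a box. Two complementary entries of the
solution are `t` and `1 - t`, so `t ∈ {0, 1}` (`solution_eq`), and both values give solutions.
-/

open Matrix Kronecker

/-- The 1 × 3 all-ones row vector `r = (1, 1, 1)`. -/
def rOnes : Matrix (Fin 1) (Fin 3) ℤ := Matrix.of fun _ _ => 1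

/-- Lexicographic identification of index triples `(i₁, i₂, i₃)` with `Fin 27`
(first coordinate most significant), matching the lexicographic ordering of the triples
`(i₁, i₂, i₃) ∈ {1, 2, 3}³` used to index the 27 coordinates. -/
def colEquiv : (Fin 3 × Fin 3) × Fin 3 ≃ Fin 27 :=
  (Equiv.prodCongr finProdFinEquiv (Equiv.refl (Fin 3))).trans finProdFinEquiv

def rowEquiv1 : (Fin 1 × Fin 3) × Fin 3 ≃ Fin 9 :=
  (Equiv.prodCongr finProdFinEquiv (Equiv.refl (Fin 3))).trans finProdFinEquiv

def rowEquiv2 : (Fin 3 × Fin 1) × Fin 3 ≃ Fin 9 :=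
  (Equiv.prodCongr finProdFinEquiv (Equiv.refl (Fin 3))).trans finProdFinEquiv

def rowEquiv3 : (Fin 3 × Fin 3) × Fin 1 ≃ Fin 9 :=
  (Equiv.prodCongr finProdFinEquiv (Equiv.refl (Fin 1))).trans finProdFinEquiv

/-- The 27 × 27 matrix obtained by stacking vertically the three Kronecker products
`r ⊗ I₃ ⊗ I₃`, `I₃ ⊗ r ⊗ I₃` and `I₃ ⊗ I₃ ⊗ r`, where `I₃` is the 3 × 3 identity matrix and
`r = (1, 1, 1)` is the 1 × 3 all-ones row, with columns indexed lexicographically by triples. -/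
def M : Matrix (Fin 27) (Fin 27) ℤ :=
  Matrix.reindex
    ((rowEquiv1.sumCongr (rowEquiv2.sumCongr rowEquiv3)).trans
      (((Equiv.refl (Fin 9)).sumCongr finSumFinEquiv).trans finSumFinEquiv))
    colEquiv
    (Matrix.fromRows
      (rOnes ⊗ₖ (1 : Matrix (Fin 3) (Fin 3) ℤ) ⊗ₖ (1 : Matrix (Fin 3) (Fin 3) ℤ))
      (Matrix.fromRows
        ((1 : Matrix (Fin 3) (Fin 3) ℤ) ⊗ₖ rOnes ⊗ₖ (1 : Matrix (Fin 3) (Fin 3) ℤ))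
        ((1 : Matrix (Fin 3) (Fin 3) ℤ) ⊗ₖ (1 : Matrix (Fin 3) (Fin 3) ℤ) ⊗ₖ rOnes)))

/-- The particular solution of block 332 (coordinates indexed lexicographically by triples,
coordinate 27 corresponding to (3,3,3)). -/
def xp : Fin 27 → ℤ := ![0,1,0,0,52,0,0,1,1,0,52,0,54,2757,0,0,53,53,0,1,1,0,53,53,1,0,0]

/-- Position of the `t`-th entry of the line of the `3 × 3 × 3` array that row `i` of `M` sums:
rows `0–8`, `9–17` and `18–26` are the lines in the first, second and third direction. -/
def lineEntry (i : Fin 27) (t : Fin 3) : Fin 27 :=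
  if i.val < 9 then Fin.ofNat 27 (9 * t.val + i.val)
  else if i.val < 18 then
    Fin.ofNat 27 (9 * ((i.val - 9) / 3) + 3 * t.val + i.val % 3)
  else Fin.ofNat 27 (3 * (i.val - 18) + t.val)

lemma M_apply (i j : Fin 27) : M i j = ∑ t : Fin 3, if lineEntry i t = j then 1 else 0 := by
  have h : ∀ i j : Fin 27,
      decide (M i j = ∑ t : Fin 3, if lineEntry i t = j then 1 else 0) = true := by
    decide +kernel
  exact of_decide_eq_true (h i j)

lemma M_mulVec_apply (x : Fin 27 → ℤ) (i : Fin 27) :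
    M.mulVec x i = x (lineEntry i 0) + x (lineEntry i 1) + x (lineEntry i 2) := by
  simp only [Matrix.mulVec, dotProduct, M_apply, Finset.sum_mul]
  rw [Finset.sum_comm]
  simp [Fin.sum_univ_three]

/-- The kernel vector of `M` joining the two solutions: alternating signs on the corners of the box
`{2, 3} × {2, 3} × {1, 2}` of index triples. -/
def dir332 : Fin 27 → ℤ :=
  ![0,0,0,0,0,0,0,0,0,0,0,0,-1,1,0,1,-1,0,0,0,0,1,-1,0,-1,1,0]

set_option maxHeartbeats 2000000 in
/-- The line sums leave only `x 15` free, and `x 24 = 1 - x 15 ≥ 0` bounds it by `1`. -/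
lemma solution_eq (x : Fin 27 → ℤ) (hx : ∀ i, 0 ≤ x i) (h : M.mulVec x = M.mulVec xp)
    (h26 : x 26 = 0) : x = xp ∨ x = xp + dir332 := by
  have e : ∀ i, x (lineEntry i 0) + x (lineEntry i 1) + x (lineEntry i 2) =
      xp (lineEntry i 0) + xp (lineEntry i 1) + xp (lineEntry i 2) := fun i => by
    rw [← M_mulVec_apply, ← M_mulVec_apply, h]
  have e0 : x 0 + x 9 + x 18 = 0 := e 0
  have e1 : x 1 + x 10 + x 19 = 54 := e 1
  have e2 : x 2 + x 11 + x 20 = 1 := e 2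
  have e3 : x 3 + x 12 + x 21 = 54 := e 3
  have e4 : x 4 + x 13 + x 22 = 2862 := e 4
  have e5 : x 5 + x 14 + x 23 = 53 := e 5
  have e6 : x 6 + x 15 + x 24 = 1 := e 6
  have e7 : x 7 + x 16 + x 25 = 54 := e 7
  have e8 : x 8 + x 17 + x 26 = 54 := e 8
  have e9 : x 0 + x 3 + x 6 = 0 := e 9
  have e10 : x 1 + x 4 + x 7 = 54 := e 10
  have e11 : x 2 + x 5 + x 8 = 1 := e 11
  have e12 : x 9 + x 12 + x 15 = 54 := e 12
  have e13 : x 10 + x 13 + x 16 = 2862 := e 13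
  have e14 : x 11 + x 14 + x 17 = 53 := e 14
  have e15 : x 18 + x 21 + x 24 = 1 := e 15
  have e16 : x 19 + x 22 + x 25 = 54 := e 16
  have e17 : x 20 + x 23 + x 26 = 54 := e 17
  have e18 : x 0 + x 1 + x 2 = 1 := e 18
  have e19 : x 3 + x 4 + x 5 = 52 := e 19
  have e20 : x 6 + x 7 + x 8 = 2 := e 20
  have e21 : x 9 + x 10 + x 11 = 52 := e 21
  have e22 : x 12 + x 13 + x 14 = 2811 := e 22
  have e23 : x 15 + x 16 + x 17 = 106 := e 23
  have e24 : x 18 + x 19 + x 20 = 2 := e 24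
  have e25 : x 21 + x 22 + x 23 = 106 := e 25
  have e26 : x 24 + x 25 + x 26 = 1 := e 26
  have p0 := hx 0
  have p1 := hx 1
  have p2 := hx 2
  have p3 := hx 3
  have p4 := hx 4
  have p5 := hx 5
  have p6 := hx 6
  have p7 := hx 7
  have p8 := hx 8
  have p9 := hx 9
  have p10 := hx 10
  have p11 := hx 11
  have p12 := hx 12
  have p13 := hx 13
  have p14 := hx 14
  have p15 := hx 15
  have p16 := hx 16
  have p17 := hx 17
  have p18 := hx 18
  have p19 := hx 19
  have p20 := hx 20
  have p21 := hx 21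
  have p22 := hx 22
  have p23 := hx 23
  have p24 := hx 24
  have p25 := hx 25
  clear e h hx
  -- Two lines of sum zero give `x 0 = x 3 = x 6 = x 9 = x 18 = 0`. Since `x 26 = 0`, the line
  -- `x 8 + x 17 = 54` with `x 8 ≤ 1` and `x 17 ≤ 53` forces equality in both bounds, so the other
  -- entries of the two bounding lines (`x 2`, `x 5`, `x 11`, `x 14`) vanish.
  have v0 : x 0 = 0 := by omega
  have v2 : x 2 = 0 := by omega
  have v3 : x 3 = 0 := by omega
  have v5 : x 5 = 0 := by omega
  have v6 : x 6 = 0 := by omega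
  have v9 : x 9 = 0 := by omega
  have v11 : x 11 = 0 := by omega
  have v14 : x 14 = 0 := by omega
  have v18 : x 18 = 0 := by omega
  have v1 : x 1 = 1 := by omega
  have v4 : x 4 = 52 := by omega
  have v7 : x 7 = 1 := by omega
  have v8 : x 8 = 1 := by omega
  have v10 : x 10 = 52 := by omega
  have v17 : x 17 = 53 := by omega
  have v19 : x 19 = 1 := by omega
  have v20 : x 20 = 1 := by omega
  have v23 : x 23 = 53 := by omega
  -- The other seven corners of the box, in terms of the free entry `x 15`.
  have v12 : x 12 = 54 - x 15 := by omega
  have v13 : x 13 = 2757 + x 15 := by omega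
  have v16 : x 16 = 53 - x 15 := by omega
  have v21 : x 21 = 0 + x 15 := by omega
  have v22 : x 22 = 53 - x 15 := by omega
  have v24 : x 24 = 1 - x 15 := by omega
  have v25 : x 25 = 0 + x 15 := by omega
  have ht : x 15 = 0 ∨ x 15 = 1 := by omega
  rcases ht with ht | ht
  · left
    funext i
    fin_cases i <;> simp [xp] <;> omega
  · right
    funext i
    fin_cases i <;> simp [xp, dir332] <;> omega

/-- The set of nonnegative integer vectors \`x\` with \`M x = M x_p\` and \`x₂₇ = 0\` (block 332) has exactly 2 elements. -/
theorem block332_solution_count :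
    {x : Fin 27 → ℤ | (∀ i, 0 ≤ x i) ∧ M.mulVec x = M.mulVec xp ∧ x 26 = 0}.ncard = 2 := by
  have hset : {x : Fin 27 → ℤ | (∀ i, 0 ≤ x i) ∧ M.mulVec x = M.mulVec xp ∧ x 26 = 0} =
      {xp, xp + dir332} := by
    ext x
    constructor
    · rintro ⟨hx, h, h26⟩
      exact solution_eq x hx h h26
    · rintro (rfl | rfl)
      · exact ⟨by decide +kernel, rfl, rfl⟩
      · refine ⟨by decide +kernel, ?_, by decide +kernel⟩
        have hker : M.mulVec dir332 = 0 := by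
          funext i
          rw [M_mulVec_apply]
          revert i
          decide +kernel
        rw [Matrix.mulVec_add, hker, add_zero]
  rw [hset]
  exact Set.ncard_pair (by decide +kernel)
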